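/- arXiv:2308.12702 — 2 statements merged into one kernel-verified Lean document; each statement's English description precedes it below -/
import Mathlib

section
/- For every integer n ≥ 2 and every continuous map f : S^{n-1} → ℝ^{n-2}, there exist vectors v_1, v_2 ∈ S^{n-1} with ⟨v_1, v_2⟩ = 0 such that f(v_1) = f(v_2). -/
open scoped RealInnerProductSpace

/-!
Fix a unit vector `e`. For unit vectors `y ⟂ e` the vectors `(e + y) / √2` and `(e - y) / √2` are
orthogonal unit vectors, interchanged by `y ↦ -y`, so the Borsuk–Ulam theorem on the sphere of `eᗮ`
yields the required pair.

Borsuk–Ulam is reduced by Stone–Weierstrass to finding approximate zeros on the unit sphere of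
`ℝ^(m+1)` of `m` homogeneous polynomials `G i` of odd degrees `d i`. Setting the first coordinate to
`1` gives polynomials `g i` in `m` variables of degree at most `d i`. A real solution `x` of
`x i ^ d i + c * g i x = 0` with large `c` provides, after normalising `(1, x)`, a point of the
sphere where all `|G i|` are at most `1 / c`.

Such a solution is a homomorphism to `ℝ` of the algebra `A = ℝ[X] / (X i ^ d i + c * g i)`. For all
but countably many `c` the Macaulay rows of these polynomials form a basis of `ℝ[X]`, which forces
`dim A = ∏ d i`. This is odd, and an odd-dimensional `ℝ`-algebra has a residue field of odd degree
over `ℝ`, hence equal to `ℝ`.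
-/

open Module MvPolynomial

lemma exists_isMaximal_not_dvd_finrank_quotient {K A M : Type*} [Field K] [CommRing A]
    [Algebra K A] [AddCommGroup M] [Module K M] [Module A M] [IsScalarTower K A M]
    [Module.Finite K M] {q : ℕ} (hM : ¬ q ∣ finrank K M) :
    ∃ I : Ideal A, I.IsMaximal ∧ ¬ q ∣ finrank K (A ⧸ I) := by
  have : IsNoetherian A M := isNoetherian_of_tower K inferInstance
  have : IsArtinian A M := isArtinian_of_tower K inferInstance
  obtain ⟨N, hN, hmin⟩ := wellFounded_lt.has_min {N : Submodule A M | ¬ q ∣ finrank K N}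
    ⟨⊤, by rwa [Set.mem_ofPred_eq, (Submodule.topEquiv.restrictScalars K).finrank_eq]⟩
  have hN_ne_bot : N ≠ ⊥ := by
    rintro rfl
    exact hN ((finrank_zero_of_subsingleton (R := K) (M := (⊥ : Submodule A M))) ▸ dvd_zero q)
  obtain ⟨P, hPN⟩ := exists_covBy_of_wellFoundedGT (isMin_iff_eq_bot.not.2 hN_ne_bot)
  have hP : q ∣ finrank K P := not_not.1 fun h => hmin P h hPN.lt
  obtain ⟨I, hI, ⟨e⟩⟩ :=
    isSimpleModule_iff_quot_maximal.1 ((covBy_iff_quot_is_simple hPN.le).1 hPN)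
  refine ⟨I, hI, fun hdvd => hN ?_⟩
  let ψ : N →ₗ[A] A ⧸ I := e.toLinearMap ∘ₗ (P.comap N.subtype).mkQ
  have hψ_ker : ψ.ker = P.comap N.subtype := by simp [ψ, LinearEquiv.ker_comp]
  have hψ_surj : Function.Surjective ψ := e.surjective.comp (Submodule.mkQ_surjective _)
  have : Module.Finite K N := inferInstanceAs (Module.Finite K (N.restrictScalars K))
  have hker : finrank K (ψ.restrictScalars K).ker = finrank K P :=
    ((LinearEquiv.ofEq _ _ hψ_ker ≪≫ₗ
      Submodule.comapSubtypeEquivOfLe hPN.le).restrictScalars K).finrank_eq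
  have hsum := (ψ.restrictScalars K).finrank_range_add_finrank_ker
  rw [LinearMap.range_eq_top (f := ψ.restrictScalars K).2 hψ_surj, finrank_top, hker] at hsum
  exact hsum ▸ dvd_add hdvd hP

lemma nonempty_algHom_real_of_odd_finrank {A : Type*} [CommRing A] [Algebra ℝ A]
    (hA : Odd (finrank ℝ A)) : Nonempty (A →ₐ[ℝ] ℝ) := by
  have : Module.Finite ℝ A := Module.finite_of_finrank_pos hA.pos
  obtain ⟨I, hI, hodd⟩ := exists_isMaximal_not_dvd_finrank_quotient (A := A) hA.not_two_dvd_nat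
  let _ := Ideal.Quotient.field I
  rcases Real.nonempty_algEquiv_or (A ⧸ I) with ⟨⟨e⟩⟩ | ⟨⟨e⟩⟩
  · exact ⟨e.toAlgHom.comp (Ideal.Quotient.mkₐ ℝ I)⟩
  · rw [e.toLinearEquiv.finrank_eq, Complex.finrank_real_complex] at hodd
    exact absurd dvd_rfl hodd

lemma countable_spectrum_of_iUnion_invariant {K V ι : Type*} [Field K] [AddCommGroup V]
    [Module K V] [Countable ι] {E : End K V} {W : ι → Submodule K V}
    [∀ N, FiniteDimensional K (W N)] (hinv : ∀ N, ∀ v ∈ W N, E v ∈ W N)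
    (hcover : ∀ v, ∃ N, v ∈ W N) : (spectrum K E).Countable := by
  let restr (N : ι) : End K (W N) := E.restrict (hinv N)
  suffices spectrum K E ⊆ ⋃ N, spectrum K (restr N) from
    (Set.countable_iUnion fun N => (Module.End.finite_spectrum (restr N)).countable).mono this
  intro μ hμ
  by_contra hnot
  simp only [Set.mem_iUnion, not_exists, spectrum.notMem_iff, Module.End.isUnit_iff] at hnot
  refine spectrum.mem_iff.1 hμ ((Module.End.isUnit_iff _).2 ⟨?_, fun v => ?_⟩)
  · refine (injective_iff_map_eq_zero _).2 fun v hv => ?_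
    obtain ⟨N, hN⟩ := hcover v
    have : (⟨v, hN⟩ : W N) = 0 :=
      (injective_iff_map_eq_zero _).1 (hnot N).1 _ (Subtype.ext (by simpa [restr] using hv))
    exact congrArg Subtype.val this
  · obtain ⟨N, hN⟩ := hcover v
    obtain ⟨w, hw⟩ := (hnot N).2 ⟨v, hN⟩
    exact ⟨w, by simpa [restr] using congrArg Subtype.val hw⟩

lemma exists_gt_forall_isUnit_one_add_smul {A ι : Type*} [Ring A] [Algebra ℝ A] [Countable ι]
    {E : ι → A} (hE : ∀ k, (spectrum ℝ (E k)).Countable) (C : ℝ) :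
    ∃ c > C, ∀ k, IsUnit (1 + c • E k) := by
  have hcountable : (⋃ k, (fun μ : ℝ => -μ⁻¹) '' spectrum ℝ (E k)).Countable :=
    Set.countable_iUnion fun k => (hE k).image _
  obtain ⟨c, hc, hCc⟩ := (hcountable.dense_compl ℝ).exists_gt C
  refine ⟨c, hCc, fun k => ?_⟩
  rcases eq_or_ne c 0 with rfl | hc0
  · simp
  · have hμ : -c⁻¹ ∉ spectrum ℝ (E k) := fun hmem =>
      hc (Set.mem_iUnion.2 ⟨k, -c⁻¹, hmem, by simp⟩)
    have hfactor : 1 + c • E k = algebraMap ℝ A (-c) * (algebraMap ℝ A (-c⁻¹) - E k) := by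
      rw [mul_sub, ← map_mul, neg_mul_neg, mul_inv_cancel₀ hc0, map_one, map_neg, neg_mul,
        sub_neg_eq_add, Algebra.smul_def]
    rw [hfactor]
    exact ((neg_ne_zero.2 hc0).isUnit.map (algebraMap ℝ A)).mul (spectrum.notMem_iff.1 hμ)

section Macaulay

variable {n : ℕ} (d : Fin n → ℕ)

/-- The exponents of the monomials that are not divisible by any of the powers `X i ^ d i` with
`i < k`. -/
def reducedExponents (k : ℕ) : Set (Fin n →₀ ℕ) := {a | ∀ i : Fin n, i.val < k → a i < d i}

/-- The least `i < k` such that `X i ^ d i` divides the monomial of exponent `a`, or `none` if this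
monomial is reduced. -/
def firstReducible (k : ℕ) (a : Fin n →₀ ℕ) : Option (Fin n) :=
  Fin.find? fun i => i.val < k ∧ d i ≤ a i

variable {d} {k : ℕ} {a : Fin n →₀ ℕ} {i : Fin n}

lemma tsub_mem_reducedExponents (ha : a ∈ reducedExponents d k) (b : Fin n →₀ ℕ) :
    a - b ∈ reducedExponents d k :=
  fun j hj => tsub_le_self.trans_lt (ha j hj)

lemma firstReducible_eq_none_iff : firstReducible d k a = none ↔ a ∈ reducedExponents d k := by
  simp [firstReducible, reducedExponents]

lemma firstReducible_eq_some_iff :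
    firstReducible d k a = some i ↔ i.val < k ∧ d i ≤ a i ∧ a ∈ reducedExponents d i := by
  simp only [firstReducible, reducedExponents, Fin.find?_eq_some_iff, decide_eq_true_eq,
    decide_eq_false_iff_not, not_and, not_le, Fin.val_fin_lt, and_assoc, Set.mem_ofPred_eq]
  refine and_congr_right fun hi => and_congr_right fun _ => forall₂_congr fun j hj => ?_
  exact ⟨fun h => h (lt_trans hj hi), fun h _ => h⟩

lemma firstReducible_add_single (hi : i.val < k) (ha : a ∈ reducedExponents d i) :
    firstReducible d k (a + Finsupp.single i (d i)) = some i := by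
  refine firstReducible_eq_some_iff.2 ⟨hi, by simp, fun j hj => ?_⟩
  have hij : i ≠ j := (Fin.lt_def.2 hj).ne'
  simpa [hij] using ha j hj

lemma tsub_single_add_single_of_firstReducible (ha : firstReducible d k a = some i) :
    a - Finsupp.single i (d i) + Finsupp.single i (d i) = a :=
  tsub_add_cancel_of_le (by simpa using (firstReducible_eq_some_iff.1 ha).2.1)

variable (d) in
lemma natCard_reducedExponents : Nat.card (reducedExponents d n) = ∏ i, d i := by
  let e : reducedExponents d n ≃ (∀ i, Fin (d i)) :=
    { toFun a i := ⟨a.1 i, a.2 i i.2⟩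
      invFun b := ⟨Finsupp.equivFunOnFinite.symm fun i => (b i).val, fun i _ => by simp⟩
      left_inv a := by ext; simp
      right_inv b := by ext; simp }
  simp [Nat.card_congr e]

variable {R : Type*} [CommRing R] (d) (g : Fin n → MvPolynomial (Fin n) R)

/-- The contribution of `g` to the row of index `a` of the Macaulay matrix of the polynomials
`X i ^ d i + g i`, `i < k`; see `macaulayRow`. -/
noncomputable def macaulayTail (k : ℕ) (a : Fin n →₀ ℕ) : MvPolynomial (Fin n) R :=
  (firstReducible d k a).elim 0 fun i => monomial (a - Finsupp.single i (d i)) 1 * g i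

/-- The row of index `a` of the Macaulay matrix of the polynomials `X i ^ d i + g i`, `i < k`:
the monomial of exponent `a` in which, unless it is reduced, the first factor `X i ^ d i` has been
replaced by `X i ^ d i + g i`. -/
noncomputable def macaulayRow (k : ℕ) (a : Fin n →₀ ℕ) : MvPolynomial (Fin n) R :=
  monomial a 1 + macaulayTail d g k a

/-- The span of the rows of the Macaulay matrix with non-reduced index, a candidate for the ideal
generated by the polynomials `X i ^ d i + g i`, `i < k`. -/
noncomputable def macaulaySpan (k : ℕ) : Submodule R (MvPolynomial (Fin n) R) :=
  Submodule.span R (macaulayRow d g k '' (reducedExponents d k)ᶜ)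

variable {d}

lemma macaulayRow_of_mem_reducedExponents (ha : a ∈ reducedExponents d k) :
    macaulayRow d g k a = monomial a 1 := by
  simp [macaulayRow, macaulayTail, firstReducible_eq_none_iff.2 ha]

lemma macaulayRow_of_firstReducible_eq_some (ha : firstReducible d k a = some i) :
    macaulayRow d g k a = monomial (a - Finsupp.single i (d i)) 1 * (X i ^ d i + g i) := by
  rw [mul_add, X_pow_eq_monomial, monomial_mul, tsub_single_add_single_of_firstReducible ha,
    one_mul, macaulayRow, macaulayTail, ha, Option.elim_some]

lemma monomial_mul_mem_macaulaySpan (hi : i.val < k) (ha : a ∈ reducedExponents d i) :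
    monomial a 1 * (X i ^ d i + g i) ∈ macaulaySpan d g k := by
  have hsome := firstReducible_add_single hi ha
  refine Submodule.subset_span ⟨a + Finsupp.single i (d i), fun h => ?_, ?_⟩
  · simp [firstReducible_eq_none_iff.2 h] at hsome
  · rw [macaulayRow_of_firstReducible_eq_some g hsome, add_tsub_cancel_right]

lemma macaulaySpan_le {P : Submodule R (MvPolynomial (Fin n) R)}
    (hP : ∀ (i : Fin n) (a : Fin n →₀ ℕ), i.val < k → a ∈ reducedExponents d i →
      monomial a 1 * (X i ^ d i + g i) ∈ P) : macaulaySpan d g k ≤ P := by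
  refine Submodule.span_le.2 ?_
  rintro _ ⟨a, ha, rfl⟩
  obtain ⟨i, hi⟩ := Option.ne_none_iff_exists'.1 (firstReducible_eq_none_iff.not.2 ha)
  obtain ⟨hik, -, hred⟩ := firstReducible_eq_some_iff.1 hi
  rw [macaulayRow_of_firstReducible_eq_some g hi]
  exact hP i _ hik (tsub_mem_reducedExponents hred _)

lemma macaulaySpan_mono {l : ℕ} (hkl : k ≤ l) : macaulaySpan d g k ≤ macaulaySpan d g l :=
  macaulaySpan_le g fun _ _ hi ha => monomial_mul_mem_macaulaySpan g (hi.trans_le hkl) ha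

lemma span_image_macaulayRow_reducedExponents :
    Submodule.span R (macaulayRow d g k '' reducedExponents d k) =
      restrictSupport R (reducedExponents d k) := by
  rw [restrictSupport_eq_span]
  exact congrArg _ (Set.image_congr fun a ha => macaulayRow_of_mem_reducedExponents g ha)

lemma restrictSupport_sup_macaulaySpan :
    restrictSupport R (reducedExponents d k) ⊔ macaulaySpan d g k =
      Submodule.span R (Set.range (macaulayRow d g k)) := by
  rw [← span_image_macaulayRow_reducedExponents g, macaulaySpan, ← Submodule.span_union,
    ← Set.image_union, Set.union_compl_self, Set.image_univ]

lemma isCompl_restrictSupport_macaulaySpan (hli : LinearIndependent R (macaulayRow d g k))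
    (hspan : Submodule.span R (Set.range (macaulayRow d g k)) = ⊤) :
    IsCompl (restrictSupport R (reducedExponents d k)) (macaulaySpan d g k) := by
  refine ⟨?_, codisjoint_iff.2 (restrictSupport_sup_macaulaySpan g ▸ hspan)⟩
  rw [← span_image_macaulayRow_reducedExponents g]
  exact hli.disjoint_span_image disjoint_compl_right

-- Writing `q * monomial a 1` as the sum of a polynomial reduced for `i` and an element of
-- `macaulaySpan d g i` brings `q * monomial a 1 * (X i ^ d i + g i)` back to the spanning rows.
lemma mul_mem_macaulaySpan (hspan : ∀ k, Submodule.span R (Set.range (macaulayRow d g k)) = ⊤)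
    (q : MvPolynomial (Fin n) R) {p : MvPolynomial (Fin n) R} (hp : p ∈ macaulaySpan d g k) :
    q * p ∈ macaulaySpan d g k := by
  induction k using Nat.strong_induction_on generalizing p q with
  | _ k ih =>
  suffices macaulaySpan d g k ≤ (macaulaySpan d g k).comap (LinearMap.mulLeft R q) from this hp
  refine macaulaySpan_le g fun i a hi _ => ?_
  rw [Submodule.mem_comap, LinearMap.mulLeft_apply, ← mul_assoc]
  have hqa : q * monomial a 1 ∈
      restrictSupport R (reducedExponents d i) ⊔ macaulaySpan d g i := by
    rw [restrictSupport_sup_macaulaySpan, hspan]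
    trivial
  obtain ⟨u, hu, v, hv, huv⟩ := Submodule.mem_sup.1 hqa
  have hreduced : u * (X i ^ d i + g i) ∈ macaulaySpan d g k := by
    suffices restrictSupport R (reducedExponents d i) ≤
      (macaulaySpan d g k).comap (LinearMap.mulRight R (X i ^ d i + g i)) from this hu
    rw [restrictSupport_eq_span, Submodule.span_le]
    rintro _ ⟨b, hb, rfl⟩
    exact monomial_mul_mem_macaulaySpan g hi hb
  have hsmaller : v * (X i ^ d i + g i) ∈ macaulaySpan d g k := by
    rw [mul_comm]
    exact macaulaySpan_mono g hi.le (ih i hi _ hv)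
  rw [← huv, add_mul]
  exact add_mem hreduced hsmaller

lemma restrictScalars_ideal_span_eq_macaulaySpan (hd : ∀ i, 0 < d i)
    (hspan : ∀ k, Submodule.span R (Set.range (macaulayRow d g k)) = ⊤) :
    (Ideal.span (Set.range fun i => X i ^ d i + g i)).restrictScalars R = macaulaySpan d g n := by
  refine le_antisymm ?_ (macaulaySpan_le g fun i a _ _ => ?_)
  · let I : Ideal (MvPolynomial (Fin n) R) :=
      { macaulaySpan d g n with smul_mem' := fun q _ hp => mul_mem_macaulaySpan g hspan q hp }
    suffices Ideal.span (Set.range fun i => X i ^ d i + g i) ≤ I from this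
    refine Ideal.span_le.2 ?_
    rintro _ ⟨i, rfl⟩
    have : monomial 0 1 * (X i ^ d i + g i) ∈ macaulaySpan d g n :=
      monomial_mul_mem_macaulaySpan g i.2 fun j _ => hd j
    simpa [I] using this
  · exact Ideal.mul_mem_left _ _ (Ideal.subset_span ⟨i, rfl⟩)

theorem finrank_quotient_span_pow_add [Nontrivial R] (hd : ∀ i, 0 < d i)
    (hli : LinearIndependent R (macaulayRow d g n))
    (hspan : ∀ k, Submodule.span R (Set.range (macaulayRow d g k)) = ⊤) :
    finrank R (MvPolynomial (Fin n) R ⧸ Ideal.span (Set.range fun i => X i ^ d i + g i)) =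
      ∏ i, d i := by
  have hcompl := (isCompl_restrictSupport_macaulaySpan g hli (hspan n)).symm
  rw [← restrictScalars_ideal_span_eq_macaulaySpan g hd hspan] at hcompl
  rw [← (Submodule.Quotient.restrictScalarsEquiv R _).finrank_eq,
    (Submodule.quotientEquivOfIsCompl _ _ hcompl).finrank_eq,
    finrank_eq_nat_card_basis (basisRestrictSupport R _), natCard_reducedExponents]

variable {g}

lemma totalDegree_macaulayTail_le (hg : ∀ i, (g i).totalDegree ≤ d i) :
    (macaulayTail d g k a).totalDegree ≤ a.degree := by
  rcases h : firstReducible d k a with _ | i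
  · simp [macaulayTail, h]
  · rw [macaulayTail, h, Option.elim_some]
    calc (monomial (a - Finsupp.single i (d i)) 1 * g i).totalDegree
        ≤ (a - Finsupp.single i (d i)).degree + d i :=
          (totalDegree_mul _ _).trans (add_le_add (totalDegree_monomial_le _ _) (hg i))
      _ = (a - Finsupp.single i (d i) + Finsupp.single i (d i)).degree := by simp
      _ = a.degree := by rw [tsub_single_add_single_of_firstReducible h]

variable (g) in
lemma macaulayRow_smul (c : R) :
    macaulayRow d (c • g) k a = monomial a 1 + c • macaulayTail d g k a := by
  rcases h : firstReducible d k a with _ | i <;> simp [macaulayRow, macaulayTail, h]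

variable (d g) in
/-- The linear map sending each monomial to the corresponding `macaulayTail`, so that
`1 + c • macaulayTailEnd d g k` sends the monomials to the Macaulay rows of `c • g`. -/
noncomputable def macaulayTailEnd (k : ℕ) : End R (MvPolynomial (Fin n) R) :=
  (basisMonomials (Fin n) R).constr R (macaulayTail d g k)

lemma macaulayTailEnd_monomial :
    macaulayTailEnd d g k (monomial a 1) = macaulayTail d g k a := by
  simpa [macaulayTailEnd] using
    (basisMonomials (Fin n) R).constr_basis R (macaulayTail d g k) a

lemma macaulayTailEnd_mem_restrictTotalDegree (hg : ∀ i, (g i).totalDegree ≤ d i) (N : ℕ)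
    {p : MvPolynomial (Fin n) R} (hp : p ∈ restrictTotalDegree (Fin n) R N) :
    macaulayTailEnd d g k p ∈ restrictTotalDegree (Fin n) R N := by
  suffices restrictTotalDegree (Fin n) R N ≤
    (restrictTotalDegree (Fin n) R N).comap (macaulayTailEnd d g k) from this hp
  conv_lhs => rw [restrictTotalDegree, restrictSupport_eq_span]
  rw [Submodule.span_le]
  rintro _ ⟨a, ha, rfl⟩
  simp only [Submodule.comap_coe, Set.mem_preimage, SetLike.mem_coe, mem_restrictTotalDegree,
    macaulayTailEnd_monomial]
  exact (totalDegree_macaulayTail_le hg).trans ha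

lemma macaulayRow_smul_eq_comp (c : R) :
    macaulayRow d (c • g) k =
      ⇑(1 + c • macaulayTailEnd d g k : End R (MvPolynomial (Fin n) R)) ∘
        basisMonomials (Fin n) R := by
  funext a
  simp [macaulayRow_smul, macaulayTailEnd_monomial]

end Macaulay

section RealSolutions

variable {n : ℕ} {d : Fin n → ℕ} {g : Fin n → MvPolynomial (Fin n) ℝ}

lemma countable_spectrum_macaulayTailEnd (hg : ∀ i, (g i).totalDegree ≤ d i) (k : ℕ) :
    (spectrum ℝ (macaulayTailEnd d g k)).Countable :=
  countable_spectrum_of_iUnion_invariant (W := fun N => restrictTotalDegree (Fin n) ℝ N)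
    (fun N _ => macaulayTailEnd_mem_restrictTotalDegree hg N)
    fun p => ⟨p.totalDegree, (mem_restrictTotalDegree _ _ _).2 le_rfl⟩

lemma exists_gt_finrank_quotient_span_pow_add_smul (hd : ∀ i, 0 < d i)
    (hg : ∀ i, (g i).totalDegree ≤ d i) (C : ℝ) :
    ∃ c > C, finrank ℝ (MvPolynomial (Fin n) ℝ ⧸
      Ideal.span (Set.range fun i => X i ^ d i + (c • g) i)) = ∏ i, d i := by
  obtain ⟨c, hCc, hunit⟩ :=
    exists_gt_forall_isUnit_one_add_smul (countable_spectrum_macaulayTailEnd hg) C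
  have hbij k := (End.isUnit_iff _).1 (hunit k)
  refine ⟨c, hCc, finrank_quotient_span_pow_add (c • g) hd ?_ fun k => ?_⟩
  · rw [macaulayRow_smul_eq_comp]
    exact (basisMonomials (Fin n) ℝ).linearIndependent.map' _ (LinearMap.ker_eq_bot.2 (hbij n).1)
  · rw [macaulayRow_smul_eq_comp, Set.range_comp, Submodule.span_image, Basis.span_eq,
      Submodule.map_top, LinearMap.range_eq_top.2 (hbij k).2]

theorem exists_gt_exists_pow_add_mul_eval_eq_zero (hd : ∀ i, Odd (d i))
    (hg : ∀ i, (g i).totalDegree ≤ d i) (C : ℝ) :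
    ∃ c > C, ∃ x : Fin n → ℝ, ∀ i, x i ^ d i + c * eval x (g i) = 0 := by
  obtain ⟨c, hCc, hfinrank⟩ :=
    exists_gt_finrank_quotient_span_pow_add_smul (fun i => (hd i).pos) hg C
  have hodd : Odd (∏ i, d i) := Finset.prod_induction d Odd (fun _ _ => Odd.mul) odd_one
    fun i _ => hd i
  obtain ⟨φ⟩ := nonempty_algHom_real_of_odd_finrank (hfinrank ▸ hodd)
  let ψ : MvPolynomial (Fin n) ℝ →ₐ[ℝ] ℝ := φ.comp (Ideal.Quotient.mkₐ ℝ _)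
  have hψ (p : MvPolynomial (Fin n) ℝ) : ψ p = eval (fun i => ψ (X i)) p := by
    rw [← coe_aeval_eq_eval]
    exact DFunLike.congr_fun (aeval_unique ψ) p
  refine ⟨c, hCc, fun i => ψ (X i), fun i => ?_⟩
  have hzero : ψ (X i ^ d i + (c • g) i) = 0 := by
    have hmem := Ideal.subset_span (Set.mem_range_self (f := fun i => X i ^ d i + (c • g) i) i)
    simp only [ψ, AlgHom.comp_apply, Ideal.Quotient.mkₐ_eq_mk,
      Ideal.Quotient.eq_zero_iff_mem.2 hmem, map_zero]
  simpa [hψ (g i)] using hzero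

end RealSolutions

lemma eval_mul_of_isHomogeneous {σ R : Type*} [CommSemiring R] {p : MvPolynomial σ R} {k : ℕ}
    (hp : p.IsHomogeneous k) (c : R) (y : σ → R) :
    eval (fun i => c * y i) p = c ^ k * eval y p := by
  rw [eval_eq, eval_eq, Finset.mul_sum]
  refine Finset.sum_congr rfl fun a ha => ?_
  have hdeg : ∑ i ∈ a.support, a i = k := (hp.degree_eq_sum_deg_support ha).symm
  simp only [mul_pow, Finset.prod_mul_distrib, Finset.prod_pow_eq_pow_sum, hdeg]
  exact mul_left_comm _ _ _

lemma totalDegree_aeval_le {σ τ R : Type*} [CommSemiring R] {f : σ → MvPolynomial τ R}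
    (hf : ∀ i, (f i).totalDegree ≤ 1) (p : MvPolynomial σ R) :
    (aeval f p).totalDegree ≤ p.totalDegree := by
  rw [aeval_def, eval₂_eq]
  refine totalDegree_finsetSum_le fun a ha => ?_
  calc (algebraMap R (MvPolynomial τ R) (coeff a p) * ∏ i ∈ a.support, f i ^ a i).totalDegree
      ≤ (algebraMap R (MvPolynomial τ R) (coeff a p)).totalDegree
        + (∏ i ∈ a.support, f i ^ a i).totalDegree := totalDegree_mul _ _
    _ ≤ ∑ i ∈ a.support, (f i ^ a i).totalDegree := by
      rw [algebraMap_eq, totalDegree_C, zero_add]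
      exact totalDegree_finsetProd _ _
    _ ≤ ∑ i ∈ a.support, a i := Finset.sum_le_sum fun i _ =>
      (totalDegree_pow _ _).trans (mul_le_of_le_one_right' (hf i))
    _ ≤ p.totalDegree := le_totalDegree ha

lemma exists_gt_exists_succ_pow_add_mul_eval_eq_zero {m : ℕ} {d : Fin m → ℕ}
    (hd : ∀ i, Odd (d i)) {G : Fin m → MvPolynomial (Fin (m + 1)) ℝ}
    (hG : ∀ i, (G i).totalDegree ≤ d i) (C : ℝ) :
    ∃ c > C, ∃ z : Fin (m + 1) → ℝ, z 0 = 1 ∧ ∀ i, z i.succ ^ d i + c * eval z (G i) = 0 := by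
  let s : Fin (m + 1) → MvPolynomial (Fin m) ℝ := Fin.cons 1 X
  have hs (j) : (s j).totalDegree ≤ 1 := by cases j using Fin.cases <;> simp [s]
  obtain ⟨c, hc, x, hx⟩ := exists_gt_exists_pow_add_mul_eval_eq_zero
    (g := fun i => aeval s (G i)) hd (fun i => (totalDegree_aeval_le hs _).trans (hG i)) C
  have heval (p : MvPolynomial (Fin (m + 1)) ℝ) :
      eval x (aeval s p) = eval (Fin.cons 1 x : Fin (m + 1) → ℝ) p := by
    have : (aeval x).comp (aeval s) = (aeval (Fin.cons 1 x : Fin (m + 1) → ℝ) : _ →ₐ[ℝ] ℝ) := by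
      ext j
      cases j using Fin.cases <;> simp [s]
    exact DFunLike.congr_fun this p
  exact ⟨c, hc, Fin.cons 1 x, Fin.cons_zero _ _, fun i => heval (G i) ▸ hx i⟩

theorem exists_sphere_forall_abs_eval_le {m : ℕ} {d : Fin m → ℕ} (hd : ∀ i, Odd (d i))
    {G : Fin m → MvPolynomial (Fin (m + 1)) ℝ} (hG : ∀ i, (G i).IsHomogeneous (d i))
    {ε : ℝ} (hε : 0 < ε) :
    ∃ y : Metric.sphere (0 : EuclideanSpace ℝ (Fin (m + 1))) 1, ∀ i, |eval y.1 (G i)| ≤ ε := by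
  obtain ⟨c, hc, z, hz0, hz⟩ := exists_gt_exists_succ_pow_add_mul_eval_eq_zero hd
    (fun i => (hG i).totalDegree_le) ε⁻¹
  have hc0 : 0 < c := (inv_pos.2 hε).trans hc
  have hz_ne : WithLp.toLp 2 z ≠ 0 := fun h =>
    one_ne_zero (hz0.symm.trans (congrFun (congrArg WithLp.ofLp h) 0))
  let y : EuclideanSpace ℝ (Fin (m + 1)) := ‖WithLp.toLp 2 z‖⁻¹ • WithLp.toLp 2 z
  have hy : ‖y‖ = 1 := norm_smul_inv_norm hz_ne
  refine ⟨⟨y, mem_sphere_zero_iff_norm.2 hy⟩, fun i => ?_⟩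
  have hGy : eval y (G i) = -c⁻¹ * y i.succ ^ d i := by
    have hGz : eval z (G i) = -c⁻¹ * z i.succ ^ d i := by
      field_simp
      linear_combination hz i
    have hyz : ⇑y = fun j => ‖WithLp.toLp 2 z‖⁻¹ * z j := rfl
    rw [hyz, eval_mul_of_isHomogeneous (hG i), hGz, mul_pow]
    exact mul_left_comm _ _ _
  calc |eval y (G i)| = c⁻¹ * |y i.succ| ^ d i := by
        rw [hGy, abs_mul, abs_neg, abs_of_pos (inv_pos.2 hc0), abs_pow]
    _ ≤ c⁻¹ := mul_le_of_le_one_right (inv_pos.2 hc0).le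
        (pow_le_one₀ (abs_nonneg _) (hy ▸ PiLp.norm_apply_le y i.succ))
    _ ≤ ε := inv_le_of_inv_le₀ hε hc.le

lemma eval_eq_sum_range_homogeneousComponent {σ R : Type*} [CommSemiring R]
    {p : MvPolynomial σ R} {N : ℕ} (hp : p.totalDegree < N) (y : σ → R) :
    eval y p = ∑ j ∈ Finset.range N, eval y (homogeneousComponent j p) := by
  conv_lhs => rw [← sum_homogeneousComponent p, map_sum]
  refine Finset.sum_subset (Finset.range_subset_range.2 hp) fun j _ hj => ?_
  rw [homogeneousComponent_eq_zero _ _ (by simpa using hj), map_zero]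

section OddHomogenization

variable {σ R : Type*} [Fintype σ]

/-- The odd part of `p`, made homogeneous of degree `2 * D + 1` by multiplying its homogeneous
components of odd degree at most `2 * D + 1` by powers of `∑ i, X i ^ 2`. Since this sum is `1` on
the unit sphere, the values there are those of the odd part if `p` has degree at most
`2 * D + 1`. -/
noncomputable def oddHomogenization [CommSemiring R] (D : ℕ) (p : MvPolynomial σ R) :
    MvPolynomial σ R :=
  ∑ j ∈ Finset.range (2 * D + 2) with Odd j,
    homogeneousComponent j p * (∑ i, X i ^ 2) ^ ((2 * D + 1 - j) / 2)

lemma isHomogeneous_oddHomogenization [CommSemiring R] (D : ℕ) (p : MvPolynomial σ R) :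
    (oddHomogenization D p).IsHomogeneous (2 * D + 1) := by
  refine IsHomogeneous.sum _ _ _ fun j hj => ?_
  obtain ⟨hjD, l, rfl⟩ := Finset.mem_filter.1 hj
  have hsq : (∑ i, X i ^ 2 : MvPolynomial σ R).IsHomogeneous 2 :=
    IsHomogeneous.sum _ _ _ fun i _ => isHomogeneous_X_pow i 2
  convert (homogeneousComponent_isHomogeneous (2 * l + 1) p).mul (hsq.pow _) using 1
  have := Finset.mem_range.1 hjD
  lia

lemma two_mul_eval_oddHomogenization [CommRing R] {D : ℕ} {p : MvPolynomial σ R}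
    (hp : p.totalDegree ≤ 2 * D + 1) {y : σ → R} (hy : ∑ i, y i ^ 2 = 1) :
    2 * eval y (oddHomogenization D p) = eval y p - eval (-y) p := by
  have hneg (j : ℕ) : eval (-y) (homogeneousComponent j p) =
      (-1) ^ j * eval y (homogeneousComponent j p) := by
    rw [← eval_mul_of_isHomogeneous (homogeneousComponent_isHomogeneous j p)]
    simp only [neg_one_mul]
    rfl
  rw [eval_eq_sum_range_homogeneousComponent (Nat.lt_succ_of_le hp),
    eval_eq_sum_range_homogeneousComponent (Nat.lt_succ_of_le hp), ← Finset.sum_sub_distrib,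
    oddHomogenization, map_sum, Finset.sum_filter, Finset.mul_sum]
  refine Finset.sum_congr rfl fun j _ => ?_
  rcases Nat.even_or_odd j with hj | hj
  · simp [hneg, hj, hj.neg_one_pow]
  · simp [hneg, hj, hj.neg_one_pow, hy, two_mul]

end OddHomogenization

lemma exists_forall_abs_eval_sub_lt {Y σ : Type*} [TopologicalSpace Y] [CompactSpace Y]
    (c : σ → C(Y, ℝ)) (hc : ∀ x y, (∀ i, c i x = c i y) → x = y) {h : Y → ℝ} (hh : Continuous h)
    {ε : ℝ} (hε : 0 < ε) :
    ∃ p : MvPolynomial σ ℝ, ∀ y, |eval (fun i => c i y) p - h y| < ε := by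
  have hsep : (aeval c : MvPolynomial σ ℝ →ₐ[ℝ] C(Y, ℝ)).range.SeparatesPoints := by
    intro x y hxy
    obtain ⟨i, hi⟩ := not_forall.1 (mt (hc x y) hxy)
    exact ⟨_, ⟨c i, ⟨X i, by simp⟩, rfl⟩, hi⟩
  obtain ⟨⟨_, p, rfl⟩, hp⟩ :=
    ContinuousMap.exists_mem_subalgebra_near_continuous_of_separatesPoints _ hsep h hh ε hε
  refine ⟨p, fun y => ?_⟩
  have heval : (ContinuousMap.evalAlgHom ℝ ℝ y).comp (aeval c) =
      (aeval fun i => c i y : MvPolynomial σ ℝ →ₐ[ℝ] ℝ) := by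
    ext i
    simp
  have hpy : aeval c p y = eval (fun i => c i y) p := DFunLike.congr_fun heval p
  exact hpy ▸ hp y

section BorsukUlam

open Metric (sphere)

lemma exists_sphere_forall_abs_lt_of_odd {m : ℕ}
    {h : sphere (0 : EuclideanSpace ℝ (Fin (m + 1))) 1 → Fin m → ℝ} (hh : Continuous h)
    (hodd : ∀ y, h (-y) = -h y) {ε : ℝ} (hε : 0 < ε) : ∃ y, ∀ i, |h y i| < ε := by
  let coord (j : Fin (m + 1)) : C(sphere (0 : EuclideanSpace ℝ (Fin (m + 1))) 1, ℝ) :=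
    ⟨fun y => y.1 j, by fun_prop⟩
  have hcoord (x y) (hxy : ∀ j, coord j x = coord j y) : x = y := Subtype.ext (PiLp.ext hxy)
  choose p hp using fun i =>
    exists_forall_abs_eval_sub_lt coord hcoord ((continuous_apply i).comp hh) (half_pos hε)
  let D := Finset.univ.sup fun i => (p i).totalDegree
  have hD (i) : (p i).totalDegree ≤ 2 * D + 1 := by
    have : (p i).totalDegree ≤ D := Finset.le_sup (f := fun i => (p i).totalDegree) (by simp)
    lia
  obtain ⟨y, hy⟩ := exists_sphere_forall_abs_eval_le (fun _ => ⟨D, rfl⟩)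
    (fun i => isHomogeneous_oddHomogenization D (p i)) (half_pos hε)
  have hsum : ∑ j, y.1 j ^ 2 = 1 := by
    rw [← EuclideanSpace.real_norm_sq_eq, norm_eq_of_mem_sphere, one_pow]
  refine ⟨y, fun i => ?_⟩
  have hpart := two_mul_eval_oddHomogenization (hD i) hsum
  have hGy := abs_le.1 (hy i)
  have hpy : |eval y.1 (p i) - h y i| < ε / 2 := hp i y
  have hpy' : |eval (-y.1.ofLp) (p i) + h y i| < ε / 2 := by
    have := hp i (-y)
    simp only [Function.comp_apply, hodd, Pi.neg_apply, sub_neg_eq_add] at this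
    exact this
  rw [abs_lt] at hpy hpy' ⊢
  constructor <;> linarith

theorem exists_sphere_eq_zero_of_odd {m : ℕ}
    {h : sphere (0 : EuclideanSpace ℝ (Fin (m + 1))) 1 → Fin m → ℝ} (hh : Continuous h)
    (hodd : ∀ y, h (-y) = -h y) : ∃ y, h y = 0 := by
  suffices 0 ∈ closure (Set.range h) by rwa [(isCompact_range hh).isClosed.closure_eq] at this
  refine Metric.mem_closure_range_iff.2 fun ε hε => ?_
  obtain ⟨y, hy⟩ := exists_sphere_forall_abs_lt_of_odd hh hodd hε
  exact ⟨y, by simpa [dist_zero_left, pi_norm_lt_iff hε] using hy⟩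

variable {E F : Type*} [NormedAddCommGroup E] [InnerProductSpace ℝ E] [NormedAddCommGroup F]
  [NormedSpace ℝ F] [FiniteDimensional ℝ F]

lemma nonempty_linearIsometry_of_le_finrank {k : ℕ} (hk : k ≤ finrank ℝ E) :
    Nonempty (EuclideanSpace ℝ (Fin k) →ₗᵢ[ℝ] E) := by
  rcases k.eq_zero_or_pos with rfl | hpos
  · exact ⟨⟨0, fun x => by simp [Subsingleton.elim x 0]⟩⟩
  have : FiniteDimensional ℝ E := .of_finrank_pos (hpos.trans_le hk)
  let b := EuclideanSpace.basisFun (Fin k) ℝ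
  let u : Fin k → E := stdOrthonormalBasis ℝ E ∘ Fin.castLE hk
  have hu : Orthonormal ℝ u :=
    (stdOrthonormalBasis ℝ E).orthonormal.comp _ (Fin.castLE_injective hk)
  refine ⟨(b.toBasis.constr ℝ u).isometryOfOrthonormal (v := b.toBasis) ?_ ?_⟩
  · simp
  · convert hu using 1
    funext i
    simp

theorem exists_sphere_apply_eq_apply_neg (hEF : finrank ℝ F < finrank ℝ E)
    {f : sphere (0 : E) 1 → F} (hf : Continuous f) : ∃ y, f y = f (-y) := by
  obtain ⟨L⟩ := nonempty_linearIsometry_of_le_finrank (Nat.succ_le_of_lt hEF)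
  let e : F ≃L[ℝ] (Fin (finrank ℝ F) → ℝ) := .ofFinrankEq (by simp)
  let ι (y : sphere (0 : EuclideanSpace ℝ (Fin (finrank ℝ F + 1))) 1) : sphere (0 : E) 1 :=
    ⟨L y, by simp⟩
  have hι : Continuous ι := by fun_prop
  have hι_neg (y) : ι (-y) = -ι y := Subtype.ext (by simp [ι])
  obtain ⟨y, hy⟩ := exists_sphere_eq_zero_of_odd (h := fun y => e (f (ι y) - f (ι (-y))))
    (by fun_prop) fun y => by rw [neg_neg, ← map_neg, neg_sub]
  refine ⟨ι y, ?_⟩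
  rwa [map_eq_zero_iff e e.injective, sub_eq_zero, hι_neg] at hy

lemma norm_inv_sqrt_two_smul_add {x y : E} (hx : ‖x‖ = 1) (hy : ‖y‖ = 1) (hxy : ⟪x, y⟫ = 0) :
    ‖(√2)⁻¹ • (x + y)‖ = 1 := by
  have hsq : ‖x + y‖ * ‖x + y‖ = 2 := by
    rw [norm_add_sq_eq_norm_sq_add_norm_sq_real hxy, hx, hy]
    norm_num
  have hnorm : ‖x + y‖ = √2 := by rw [← hsq, Real.sqrt_mul_self (norm_nonneg _)]
  rw [norm_smul, hnorm, norm_inv, Real.norm_of_nonneg (Real.sqrt_nonneg 2), inv_mul_cancel₀]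
  positivity

theorem flip_stiefel_sphere_pair_general (hEF : finrank ℝ F + 2 ≤ finrank ℝ E)
    {f : sphere (0 : E) 1 → F} (hf : Continuous f) :
    ∃ v₁ v₂ : sphere (0 : E) 1, ⟪(v₁ : E), (v₂ : E)⟫ = 0 ∧ f v₁ = f v₂ := by
  have : FiniteDimensional ℝ E := .of_finrank_pos (by lia)
  have : Nontrivial E := nontrivial_of_finrank_pos (R := ℝ) (by lia)
  obtain ⟨e, he⟩ := exists_norm_eq E zero_le_one
  have hfinrank : finrank ℝ F < finrank ℝ (ℝ ∙ e)ᗮ := by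
    have := (ℝ ∙ e).finrank_add_finrank_orthogonal
    rw [finrank_span_singleton (norm_ne_zero_iff.1 (he ▸ one_ne_zero))] at this
    lia
  let v (y : sphere (0 : (ℝ ∙ e)ᗮ) 1) : sphere (0 : E) 1 :=
    ⟨(√2)⁻¹ • (e + y.1), mem_sphere_zero_iff_norm.2 <| norm_inv_sqrt_two_smul_add he
      (norm_eq_of_mem_sphere y) (Submodule.mem_orthogonal_singleton_iff_inner_right.1 y.1.2)⟩
  obtain ⟨y, hy⟩ := exists_sphere_apply_eq_apply_neg hfinrank (f := f ∘ v) (by fun_prop)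
  refine ⟨v y, v (-y), ?_, hy⟩
  have hnorm : ‖e‖ = ‖(y.1 : E)‖ := he.trans (norm_eq_of_mem_sphere y).symm
  have hv : (v (-y) : E) = (√2)⁻¹ • (e - y.1) := by simp [v, sub_eq_add_neg]
  rw [hv, real_inner_smul_left, real_inner_smul_right,
    (real_inner_add_sub_eq_zero_iff e y.1).2 hnorm, mul_zero, mul_zero]

end BorsukUlam

/-- For every integer `n ≥ 2` and every continuous map `f : S^{n-1} → ℝ^{n-2}`,
there exist orthogonal `v₁ v₂` in the sphere with `f v₁ = f v₂`. -/
theorem flip_stiefel_sphere_pair (n : ℕ) (hn : 2 ≤ n)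
    (f : Metric.sphere (0 : EuclideanSpace ℝ (Fin n)) 1 → EuclideanSpace ℝ (Fin (n - 2)))
    (hf : Continuous f) :
    ∃ v₁ v₂ : Metric.sphere (0 : EuclideanSpace ℝ (Fin n)) 1,
      ⟪(v₁ : EuclideanSpace ℝ (Fin n)), (v₂ : EuclideanSpace ℝ (Fin n))⟫ = 0 ∧
      f v₁ = f v₂ :=
  flip_stiefel_sphere_pair_general (by simp [hn]) hf
end

section
/- For every integer n ≥ 6 and every continuous map f : S^{n-1} → ℝ^{⌊(n - r_n - 1)/3⌋}, there exist pairwise orthogonal vectors v_1, v_2, v_3, v_4, v_5, v_6 ∈ S^{n-1} such that f(v_1) = f(v_2), f(v_3) = f(v_4), and f(v_5) = f(v_6), where r_n = 5 if n ≡ 1 or 2 (mod 4), r_n = 4 if n ≡ 0 (mod 4), and r_n = 3 if n ≡ 3 (mod 4). -/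
open scoped RealInnerProductSpace

/-- `r_n = 5` if `n ≡ 1, 2 (mod 4)`, `4` if `n ≡ 0 (mod 4)`, `3` if `n ≡ 3 (mod 4)`. -/
def flipStiefelR (n : ℕ) : ℕ :=
  if n % 4 = 0 then 4 else if n % 4 = 3 then 3 else 5

/-!
A continuous map `f : sphere (0 : E) 1 → Y` into a space of dimension at most `dim E - 2` takes
equal values at two orthogonal points. Otherwise, by compactness, points of the sphere whose images
are `ε`-close are never orthogonal. Over a small ball `B c` of `Y`, the inner product of two points
in one connected component of `f ⁻¹' B c` is then positive, so choosing in each component a point of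
a countable dense set gives a locally constant `σ c` with `⟪x, σ c x⟫ > 0`. Gluing with
smooth bump functions `φ c` yields a continuous field `H x = ∑ c, φ c (f x) • σ c x` such that
`⟪x, H x⟫ > 0`. For topological reasons the lines spanned by the vectors `H x` fill `E`, whereas the
formula for `H` puts them in countably many `C¹` images of `ℝ × Y`, which do not fill `E`.

The topological input is that a continuous field on `E` pointing outwards on a sphere vanishes
somewhere. After smoothing, a nowhere zero field would give a `C¹` map `Φ` with values in the sphere
that fixes the sphere pointwise. Then `∫ det (id + t • (Φ' - id))` over the ball is a polynomial in
`t` which equals the volume of the ball for small `t`, as `id + t • (Φ - id)` permutes the ball,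
and hence also for `t = 1`, where the integrand vanishes.

Applying the first result repeatedly, each time in the orthogonal complement of the points already
found, gives any number `k` of mutually orthogonal pairs as long as `dim Y + 2 * k ≤ dim E`.
-/

open Metric Set Filter Topology MeasureTheory
open scoped NNReal Manifold Polynomial

section VolumeOfPerturbations

theorem exists_polynomial_eval_eq_det_one_add_smul {R M : Type*} [CommRing R] [AddCommGroup M]
    [Module R M] [Module.Free R M] [Module.Finite R M] (A : M →ₗ[R] M) :
    ∃ P : R[X], P.natDegree ≤ Module.finrank R M ∧
      ∀ t, P.eval t = LinearMap.det (1 + t • A) := by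
  classical
  rcases subsingleton_or_nontrivial R with _ | _
  · exact ⟨0, by simp, fun _ ↦ Subsingleton.elim _ _⟩
  let b := Module.Free.chooseBasis R M
  let B := LinearMap.toMatrix b b A
  let I : Matrix (Module.Free.ChooseBasisIndex R M) (Module.Free.ChooseBasisIndex R M) R := 1
  refine ⟨((Polynomial.X : R[X]) • B.map Polynomial.C + I.map Polynomial.C).det, ?_, ?_⟩
  · simpa [Module.finrank_eq_card_chooseBasisIndex] using Polynomial.natDegree_det_X_add_C_le B I
  · intro t
    have hmatrix : LinearMap.toMatrix b b (1 + t • A) = t • B + I := by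
      rw [map_add, map_smul, LinearMap.toMatrix_one, add_comm]
    rw [← LinearMap.det_toMatrix b, hmatrix, ← Polynomial.coe_evalRingHom, RingHom.map_det]
    congr 1
    ext i j
    simp [I, Matrix.one_apply, apply_ite (Polynomial.eval t), mul_comm t (B i j)]

theorem exists_polynomial_eval_eq_integral {X : Type*} [MeasurableSpace X] {μ : Measure X}
    {P : X → ℝ[X]} {N : ℕ} (hdeg : ∀ x, (P x).natDegree ≤ N)
    (hint : ∀ t, Integrable (fun x ↦ (P x).eval t) μ) :
    ∃ Q : ℝ[X], ∀ t, Q.eval t = ∫ x, (P x).eval t ∂μ := by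
  let nodes : ℕ → ℝ := (↑)
  have hnodes : InjOn nodes (Finset.range (N + 1)) := Nat.cast_injective.injOn
  have hinterp x : P x = Lagrange.interpolate (Finset.range (N + 1)) nodes
      fun i ↦ (P x).eval (nodes i) := by
    refine Lagrange.eq_interpolate hnodes (Polynomial.degree_le_natDegree.trans_lt ?_)
    rw [Finset.card_range]
    exact_mod_cast Nat.lt_succ_of_le (hdeg x)
  refine ⟨Lagrange.interpolate (Finset.range (N + 1)) nodes fun i ↦ ∫ x, (P x).eval (nodes i) ∂μ,
    fun t ↦ ?_⟩
  calc
    _ = ∑ i ∈ Finset.range (N + 1), ∫ x, (P x).eval (nodes i) *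
          (Lagrange.basis (Finset.range (N + 1)) nodes i).eval t ∂μ := by
      simp [Lagrange.interpolate_apply, Polynomial.eval_finsetSum, integral_mul_const]
    _ = ∫ x, ∑ i ∈ Finset.range (N + 1), (P x).eval (nodes i) *
          (Lagrange.basis (Finset.range (N + 1)) nodes i).eval t ∂μ :=
      (integral_finsetSum _ fun i _ ↦ (hint _).mul_const _).symm
    _ = ∫ x, (P x).eval t ∂μ := by
      congr! 2 with x
      conv_rhs => rw [hinterp x]
      simp [Lagrange.interpolate_apply, Polynomial.eval_finsetSum]

variable {E : Type*} [NormedAddCommGroup E] [NormedSpace ℝ E]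

theorem bijective_add_of_lipschitzWith_lt_one [CompleteSpace E] {g : E → E} {c : ℝ≥0}
    (hg : LipschitzWith c g) (hc : c < 1) : Function.Bijective fun x ↦ x + g x := by
  have happrox : ApproximatesLinearOn (fun x ↦ x + g x)
      (ContinuousLinearEquiv.refl ℝ E : E →L[ℝ] E) univ c := by
    intro x _ y _
    simpa [add_sub_add_comm] using hg.norm_sub_le x y
  have hc' : Subsingleton E ∨ c < ‖((ContinuousLinearEquiv.refl ℝ E).symm : E →L[ℝ] E)‖₊⁻¹ := by
    rcases subsingleton_or_nontrivial E with hE | hE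
    · exact .inl hE
    · exact .inr (by simpa using hc)
  exact ⟨injOn_univ.1 (happrox.injOn hc'), happrox.surjective hc'⟩

theorem inter_frontier_nonempty_of_isPreconnected {X : Type*} [TopologicalSpace X] {s t : Set X}
    (ht : IsPreconnected t) (hs : (t ∩ s).Nonempty) (hsc : (t \ s).Nonempty) :
    (t ∩ frontier s).Nonempty := by
  by_contra! hempty
  have hcover : t ⊆ interior s ∪ (closure s)ᶜ := fun z hz ↦ by
    by_contra! hz'
    simp only [mem_union, mem_compl_iff, not_or, not_not] at hz'
    exact eq_empty_iff_forall_notMem.1 hempty z ⟨hz, hz'.2, hz'.1⟩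
  have hdisj : Disjoint (interior s) (closure s)ᶜ :=
    disjoint_compl_right.mono_left interior_subset_closure
  obtain ⟨x, hxt, hxs⟩ := hs
  obtain ⟨y, hyt, hys⟩ := hsc
  have hx : x ∈ interior s := (hcover hxt).resolve_right (not_not.2 (subset_closure hxs))
  exact hys (interior_subset (ht.subset_left_of_subset_union isOpen_interior
    isClosed_closure.isOpen_compl hdisj hcover ⟨x, hxt, hx⟩ hyt))

theorem lipschitzWith_indicator_of_eqOn_frontier {F : Type*} [NormedAddCommGroup F] {s : Set E}
    {g : E → F} {K : ℝ≥0} (hs : IsClosed s) (hg : LipschitzOnWith K g s)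
    (hfrontier : ∀ x ∈ frontier s, g x = 0) : LipschitzWith K (s.indicator g) := by
  have hcross {x y : E} (hx : x ∈ s) (hy : y ∉ s) : dist (g x) 0 ≤ K * dist x y := by
    obtain ⟨z, hz, hzs⟩ := inter_frontier_nonempty_of_isPreconnected (s := s)
      (convex_segment x y).isPreconnected ⟨x, left_mem_segment ℝ x y, hx⟩
      ⟨y, right_mem_segment ℝ x y, hy⟩
    calc
      dist (g x) 0 = dist (g x) (g z) := by rw [hfrontier z hzs]
      _ ≤ K * dist x z := hg.dist_le_mul x hx z (hs.frontier_subset hzs)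
      _ ≤ K * dist x y := by
        gcongr
        linarith [dist_add_dist_of_mem_segment hz, dist_nonneg (x := z) (y := y)]
  refine LipschitzWith.of_dist_le_mul fun x y ↦ ?_
  by_cases hx : x ∈ s <;> by_cases hy : y ∈ s
  · simpa [hx, hy] using hg.dist_le_mul x hx y hy
  · simpa [hx, hy] using hcross hx hy
  · simpa [hx, hy, dist_comm] using hcross hy hx
  · simpa [hx, hy] using by positivity

theorem eventually_forall_det_id_add_smul_pos {X : Type*} [TopologicalSpace X] {s : Set X}
    {A : X → E →L[ℝ] E} (hs : IsCompact s) (hA : Continuous A) :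
    ∀ᶠ t : ℝ in 𝓝 0, ∀ x ∈ s, 0 < (ContinuousLinearMap.id ℝ E + t • A x).det := by
  refine hs.eventually_forall_of_forall_eventually fun x _ ↦ ?_
  refine ContinuousAt.eventually_lt continuousAt_const ?_ ?_
  · exact (ContinuousLinearMap.continuous_det.comp (by fun_prop)).continuousAt
  · simp [ContinuousLinearMap.det]

variable [FiniteDimensional ℝ E]

theorem eventually_bijective_add_smul_indicator {s : Set E} {D : E → E} (hs : IsCompact s)
    (hD : ContDiff ℝ 1 D) (hfrontier : ∀ x ∈ frontier s, D x = 0) :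
    ∀ᶠ t : ℝ in 𝓝 0, Function.Bijective fun x ↦ x + t • s.indicator D x := by
  have := FiniteDimensional.complete ℝ E
  obtain ⟨K, hK⟩ :=
    (hD.locallyLipschitz.locallyLipschitzOn (s := s)).exists_lipschitzOnWith_of_compact hs
  have hLip := lipschitzWith_indicator_of_eqOn_frontier hs.isClosed hK hfrontier
  have hsmall : ∀ᶠ t : ℝ in 𝓝 0, ‖t‖₊ * K < 1 :=
    ContinuousAt.eventually_lt (by fun_prop) (by fun_prop) (by simp)
  filter_upwards [hsmall] with t ht
  refine bijective_add_of_lipschitzWith_lt_one ?_ ht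
  exact (lipschitzWith_smul t).comp hLip

variable [MeasurableSpace E] [BorelSpace E] (μ : Measure E) [μ.IsAddHaarMeasure]

theorem eventually_setIntegral_det_id_add_smul_fderiv {s : Set E} {D : E → E} (hs : IsCompact s)
    (hD : ContDiff ℝ 1 D) (hfrontier : ∀ x ∈ frontier s, D x = 0) :
    ∀ᶠ t : ℝ in 𝓝 0,
      ∫ x in s, (ContinuousLinearMap.id ℝ E + t • fderiv ℝ D x).det ∂μ = μ.real s := by
  filter_upwards [eventually_bijective_add_smul_indicator hs hD hfrontier,
    eventually_forall_det_id_add_smul_pos hs (hD.continuous_fderiv one_ne_zero)] with t hbij hpos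
  let G : E → E := fun x ↦ x + t • s.indicator D x
  have himage : G '' s = s := by
    have hfix : G '' sᶜ = sᶜ := EqOn.image_eq_self fun x hx ↦ by
      simp [G, indicator_of_notMem hx]
    rw [← compl_inj_iff, ← image_compl_eq hbij, hfix]
  have hderiv : ∀ x ∈ s, HasFDerivWithinAt G
      (ContinuousLinearMap.id ℝ E + t • fderiv ℝ D x) s x := fun x hx ↦ by
    have hDx := (hD.differentiable one_ne_zero x).hasFDerivAt
    refine ((hasFDerivAt_id x).add (hDx.const_smul t)).hasFDerivWithinAt.congr' ?_ hx
    exact fun y hy ↦ by simp [G, indicator_of_mem hy]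
  calc
    _ = ∫ x in s, |(ContinuousLinearMap.id ℝ E + t • fderiv ℝ D x).det| ∂μ :=
      setIntegral_congr_fun hs.measurableSet fun x hx ↦ (abs_of_pos (hpos x hx)).symm
    _ = ∫ _ in G '' s, (1 : ℝ) ∂μ := by
      simp [integral_image_eq_integral_abs_det_fderiv_smul μ hs.measurableSet hderiv
        hbij.injective.injOn]
    _ = μ.real s := by simp [himage]

theorem setIntegral_det_fderiv_eq_measureReal {s : Set E} {Φ : E → E} (hs : IsCompact s)
    (hΦ : ContDiff ℝ 1 Φ) (hfrontier : ∀ x ∈ frontier s, Φ x = x) :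
    ∫ x in s, (fderiv ℝ Φ x).det ∂μ = μ.real s := by
  let D : E → E := fun x ↦ Φ x - x
  have hD : ContDiff ℝ 1 D := hΦ.sub contDiff_id
  choose P hdeg hP using fun x ↦
    exists_polynomial_eval_eq_det_one_add_smul (fderiv ℝ D x : E →ₗ[ℝ] E)
  have hP' (x : E) (t : ℝ) :
      (P x).eval t = (ContinuousLinearMap.id ℝ E + t • fderiv ℝ D x).det := hP x t
  have hint (t : ℝ) : IntegrableOn (fun x ↦ (P x).eval t) s μ := by
    have hcont : Continuous (fderiv ℝ D) := hD.continuous_fderiv one_ne_zero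
    simp only [hP']
    have hdet := ContinuousLinearMap.continuous_det.comp
      (continuous_const (y := ContinuousLinearMap.id ℝ E) |>.add (hcont.const_smul t))
    exact hdet.continuousOn.integrableOn_compact hs
  obtain ⟨Q, hQ⟩ := exists_polynomial_eval_eq_integral hdeg hint
  have hconst : Q = Polynomial.C (μ.real s) := by
    refine Q.eq_of_infinite_eval_eq _ (infinite_of_mem_nhds (0 : ℝ) ?_)
    filter_upwards [eventually_setIntegral_det_id_add_smul_fderiv μ hs hD
      fun x hx ↦ sub_eq_zero.2 (hfrontier x hx)] with t ht
    simp [hQ, hP', ht]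
  have hderiv x : fderiv ℝ Φ x = ContinuousLinearMap.id ℝ E + (1 : ℝ) • fderiv ℝ D x := by
    have hΦx := hΦ.differentiable one_ne_zero x
    simp [D, fderiv_fun_sub hΦx differentiableAt_fun_id]
  calc
    _ = Q.eval 1 := by simp only [hderiv, hQ, hP']
    _ = μ.real s := by simp [hconst]

end VolumeOfPerturbations

section OutwardPointingFields

variable {E : Type*} [NormedAddCommGroup E] [InnerProductSpace ℝ E] [FiniteDimensional ℝ E]

theorem det_fderiv_eq_zero_of_norm_eq {r : E → E} {R : ℝ} {x : E} (hR : R ≠ 0)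
    (hr : DifferentiableAt ℝ r x) (hnorm : ∀ y, ‖r y‖ = R) : (fderiv ℝ r x).det = 0 := by
  by_contra hdet
  have hunit : IsUnit (fderiv ℝ r x : E →ₗ[ℝ] E) :=
    (LinearMap.isUnit_iff_isUnit_det _).2 (isUnit_iff_ne_zero.2 hdet)
  obtain ⟨v, hv : fderiv ℝ r x v = r x⟩ := ((Module.End.isUnit_iff _).1 hunit).2 (r x)
  have hconst : (fun y ↦ ⟪r y, r y⟫) = fun _ ↦ R ^ 2 := by
    simp only [real_inner_self_eq_norm_sq, hnorm]
  have hderiv : 0 = R ^ 2 + R ^ 2 := by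
    simpa [hconst, hv, hnorm] using fderiv_inner_apply ℝ hr hr v
  exact hR (pow_eq_zero_iff two_ne_zero |>.1 (by linarith))

theorem exists_norm_ne_of_eqOn_sphere {r : E → E} {R : ℝ} (hR : 0 < R) (hr : ContDiff ℝ 1 r)
    (hid : ∀ x, ‖x‖ = R → r x = x) : ∃ x, ‖r x‖ ≠ R := by
  by_contra! hnorm
  let : MeasurableSpace E := borel E
  have : BorelSpace E := ⟨rfl⟩
  have hvol := setIntegral_det_fderiv_eq_measureReal volume (isCompact_closedBall (0 : E) R) hr
    fun x hx ↦ hid x (by simpa using frontier_closedBall_subset_sphere hx)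
  have hdet x : (fderiv ℝ r x).det = 0 :=
    det_fderiv_eq_zero_of_norm_eq hR.ne' (hr.differentiable one_ne_zero x) hnorm
  have hpos : 0 < volume.real (closedBall (0 : E) R) :=
    ENNReal.toReal_pos (measure_closedBall_pos _ _ hR).ne' measure_closedBall_lt_top.ne
  exact hpos.ne (by simpa [hdet] using hvol)

theorem exists_contDiff_inner_pos {F : E → E} {s : Set E} (hs : IsClosed s) (hF : Continuous F)
    (hF0 : ∀ x, F x ≠ 0) (hpos : ∀ x ∈ s, 0 < ⟪x, F x⟫) :
    ∃ G : E → E, ContDiff ℝ 1 G ∧ (∀ x, 0 < ⟪G x, F x⟫) ∧ ∀ x ∈ s, G x = x := by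
  let t : E → Set E := fun x ↦ {w | 0 < ⟪w, F x⟫} ∩ {w | x ∈ s → w = x}
  have htc x : Convex ℝ (t x) := by
    refine (convex_halfSpace_gt ((innerₗ E).flip (F x)).isLinear 0).inter ?_
    by_cases hx : x ∈ s
    · simp [hx]
    · simpa [hx] using convex_univ
  have hlocal x : ∃ U ∈ 𝓝 x, ∃ g : E → E, ContMDiffOn 𝓘(ℝ, E) 𝓘(ℝ, E) 1 g U ∧
      ∀ y ∈ U, g y ∈ t y := by
    by_cases hx : x ∈ s
    · exact ⟨{y | 0 < ⟪y, F y⟫},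
        (isOpen_lt continuous_const (by fun_prop)).mem_nhds (hpos x hx), id, contMDiffOn_id,
        fun y hy ↦ ⟨hy, fun _ ↦ rfl⟩⟩
    · exact ⟨{y | 0 < ⟪F x, F y⟫} ∩ sᶜ,
        inter_mem ((isOpen_lt continuous_const (by fun_prop)).mem_nhds
          (real_inner_self_pos.2 (hF0 x))) (hs.isOpen_compl.mem_nhds hx),
        fun _ ↦ F x, contMDiffOn_const, fun y hy ↦ ⟨hy.1, fun hys ↦ absurd hys hy.2⟩⟩
  obtain ⟨G, hG⟩ := exists_contMDiffMap_forall_mem_convex_of_local (n := 1) 𝓘(ℝ, E) htc hlocal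
  exact ⟨G, G.contMDiff.contDiff, fun x ↦ (hG x).1, fun x ↦ (hG x).2⟩

theorem exists_eq_zero_of_inner_pos_on_sphere {F : E → E} {R : ℝ} (hR : 0 < R) (hF : Continuous F)
    (hpos : ∀ x, ‖x‖ = R → 0 < ⟪x, F x⟫) : ∃ x, F x = 0 := by
  by_contra! hF0
  obtain ⟨G, hG, hGF, hGid⟩ := exists_contDiff_inner_pos (s := {x | ‖x‖ = R})
    (isClosed_eq continuous_norm continuous_const) hF hF0 hpos
  have hG0 x : G x ≠ 0 := fun hx ↦ by simpa [hx] using hGF x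
  have hnorm x : ‖G x‖ ≠ 0 := norm_ne_zero_iff.2 (hG0 x)
  have hr : ContDiff ℝ 1 fun x ↦ (R * ‖G x‖⁻¹) • G x :=
    (contDiff_const.mul ((hG.norm ℝ hG0).inv hnorm)).smul hG
  obtain ⟨x, hx⟩ := exists_norm_ne_of_eqOn_sphere hR hr fun x hx ↦ by
    simp [hGid x hx, hx, hR.ne']
  exact hx (by simp [norm_smul, abs_of_pos hR, hnorm x])

theorem continuous_norm_smul_comp_normalize {V W : Type*} [NormedAddCommGroup V] [NormedSpace ℝ V]
    [ProperSpace V] [NormedAddCommGroup W] [NormedSpace ℝ W] {H : V → W} (hH : Continuous H) :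
    Continuous fun y : V ↦ ‖y‖ • H (‖y‖⁻¹ • y) := by
  obtain ⟨C, hC⟩ := (isCompact_closedBall (0 : V) 1).exists_bound_of_continuousOn hH.continuousOn
  have hbound (y : V) : ‖‖y‖ • H (‖y‖⁻¹ • y)‖ ≤ ‖y‖ * C := by
    rw [norm_smul, norm_norm]
    gcongr
    exact hC _ (by simpa [norm_smul] using inv_mul_le_one)
  refine continuous_iff_continuousAt.2 fun x ↦ ?_
  rcases eq_or_ne x 0 with rfl | hx
  · have hzero : Tendsto (fun y : V ↦ ‖y‖ * C) (𝓝 0) (𝓝 0) := by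
      simpa using (tendsto_norm_zero (E := V)).mul_const C
    simpa [ContinuousAt] using squeeze_zero_norm hbound hzero
  · have : ‖x‖ ≠ 0 := norm_ne_zero_iff.2 hx
    fun_prop (disch := assumption)

theorem exists_smul_eq_of_inner_pos [Nontrivial E] {H : sphere (0 : E) 1 → E} (hH : Continuous H)
    (hpos : ∀ x : sphere (0 : E) 1, 0 < ⟪(x : E), H x⟫) (v : E) :
    ∃ (a : ℝ) (x : sphere (0 : E) 1), a • H x = v := by
  rcases eq_or_ne v 0 with rfl | hv
  · obtain ⟨x, hx⟩ := (NormedSpace.sphere_nonempty (x := (0 : E)) (r := 1)).2 zero_le_one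
    exact ⟨0, ⟨x, hx⟩, zero_smul _ _⟩
  obtain ⟨K, hK⟩ := ContinuousMap.exists_restrict_eq isClosed_sphere ⟨H, hH⟩
  have hKH (x : sphere (0 : E) 1) : K x = H x := DFunLike.congr_fun hK x
  obtain ⟨y, hy⟩ := exists_eq_zero_of_inner_pos_on_sphere (R := 1) one_pos
    (F := fun y ↦ ‖y‖ • K (‖y‖⁻¹ • y) - (1 - ‖y‖) • v)
    ((continuous_norm_smul_comp_normalize K.continuous).sub (by fun_prop))
    fun x hx ↦ by simpa [hx, hKH ⟨x, by simpa using hx⟩] using hpos ⟨x, by simpa using hx⟩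
  have hy0 : y ≠ 0 := by
    rintro rfl
    simp [hv] at hy
  let x : sphere (0 : E) 1 := ⟨‖y‖⁻¹ • y, by simp [norm_smul, hy0]⟩
  have hx : ‖y‖ • H x = (1 - ‖y‖) • v := by rw [← hKH]; exact sub_eq_zero.1 hy
  have hy1 : 1 - ‖y‖ ≠ 0 := fun h ↦ by
    have := hpos x
    simp_all
  exact ⟨(1 - ‖y‖)⁻¹ * ‖y‖, x, by rw [mul_smul, hx, inv_smul_smul₀ hy1]⟩

end OutwardPointingFields

section ComponentSelection

theorem exists_countable_range_mem_connectedComponentIn {X : Type*} [TopologicalSpace X]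
    [LocallyConnectedSpace X] [TopologicalSpace.SeparableSpace X] {A : Set X} (hA : IsOpen A) :
    ∃ σ : X → X, (range σ).Countable ∧ ContinuousOn σ A ∧
      ∀ x ∈ A, σ x ∈ connectedComponentIn A x := by
  rcases isEmpty_or_nonempty X with _ | _
  · exact ⟨id, range_id.symm ▸ to_countable _, continuousOn_id, fun x ↦ isEmptyElim x⟩
  have hdense (C : Set X) : ∃ n, IsOpen C → C.Nonempty → TopologicalSpace.denseSeq X n ∈ C := by
    by_cases hC : IsOpen C ∧ C.Nonempty
    · obtain ⟨n, hn⟩ := (TopologicalSpace.denseRange_denseSeq X).exists_mem_open hC.1 hC.2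
      exact ⟨n, fun _ _ ↦ hn⟩
    · exact ⟨0, fun hopen hne ↦ absurd ⟨hopen, hne⟩ hC⟩
  choose index hindex using hdense
  let σ : X → X := fun x ↦ TopologicalSpace.denseSeq X (index (connectedComponentIn A x))
  have hcont {x : X} (hx : x ∈ A) : ContinuousAt σ x := by
    refine ContinuousAt.congr (f := fun _ ↦ σ x) continuousAt_const ?_
    filter_upwards [hA.connectedComponentIn.mem_nhds (mem_connectedComponentIn hx)] with y hy
    simp only [σ, connectedComponentIn_eq hy]
  exact ⟨σ, (countable_range _).mono (range_comp_subset_range _ (TopologicalSpace.denseSeq X)),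
    fun x hx ↦ (hcont hx).continuousWithinAt,
    fun x hx ↦ hindex _ hA.connectedComponentIn ⟨x, mem_connectedComponentIn hx⟩⟩

theorem locallyConnectedSpace_sphere {E : Type*} [NormedAddCommGroup E] [NormedSpace ℝ E] :
    LocallyConnectedSpace (sphere (0 : E) 1) := by
  have : LocallyPathConnectedSpace ({0}ᶜ : Set E) :=
    isOpen_compl_singleton.locallyPathConnectedSpace
  have hquot : IsQuotientMap (Prod.fst ∘ homeomorphUnitSphereProd E) :=
    (isOpenMap_fst.isQuotientMap continuous_fst Prod.fst_surjective).comp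
      (homeomorphUnitSphereProd E).isQuotientMap
  have := hquot.locallyPathConnectedSpace
  infer_instance

theorem inner_pos_of_isPreconnected {E X : Type*} [NormedAddCommGroup E] [InnerProductSpace ℝ E]
    [TopologicalSpace X] {C : Set X} {g : X → E} (hC : IsPreconnected C) (hg : ContinuousOn g C)
    (hne : ∀ x ∈ C, ∀ y ∈ C, ⟪g x, g y⟫ ≠ 0) {x y : X} (hx : x ∈ C) (hy : y ∈ C) :
    0 < ⟪g x, g y⟫ := by
  by_contra! hle
  obtain ⟨z, hz, hxz⟩ := hC.intermediate_value hy hx (f := fun z ↦ ⟪g x, g z⟫) (by fun_prop)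
    ⟨hle, real_inner_self_nonneg⟩
  exact hne x hx z hz hxz

theorem exists_countable_range_inner_pos {E : Type*} [NormedAddCommGroup E] [InnerProductSpace ℝ E]
    [TopologicalSpace.SeparableSpace E] {A : Set (sphere (0 : E) 1)} (hA : IsOpen A)
    (hne : ∀ x ∈ A, ∀ y ∈ A, ⟪(x : E), (y : E)⟫ ≠ 0) :
    ∃ σ : sphere (0 : E) 1 → sphere (0 : E) 1, (range σ).Countable ∧ ContinuousOn σ A ∧
      ∀ x ∈ A, 0 < ⟪(x : E), (σ x : E)⟫ := by
  have := locallyConnectedSpace_sphere (E := E)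
  have := UniformSpace.secondCountable_of_separable E
  obtain ⟨σ, hcount, hcont, hσ⟩ := exists_countable_range_mem_connectedComponentIn hA
  refine ⟨σ, hcount, hcont, fun x hx ↦ ?_⟩
  have hsub := connectedComponentIn_subset A x
  exact inner_pos_of_isPreconnected (g := ((↑) : sphere (0 : E) 1 → E))
    isPreconnected_connectedComponentIn (by fun_prop)
    (fun y hy z hz ↦ hne y (hsub hy) z (hsub hz)) (mem_connectedComponentIn hx) (hσ x hx)

end ComponentSelection

section OrthogonalPair

theorem continuous_smul_of_continuousOn_of_eq_zero {X F : Type*} [TopologicalSpace X]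
    [NormedAddCommGroup F] [NormedSpace ℝ F] {A : Set X} {φ : X → ℝ} {u : X → F} {M : ℝ}
    (hA : IsOpen A) (hφ : Continuous φ) (hφ0 : ∀ x ∉ A, φ x = 0) (hu : ContinuousOn u A)
    (hM : ∀ x, ‖u x‖ ≤ M) : Continuous fun x ↦ φ x • u x := by
  refine continuous_iff_continuousAt.2 fun x ↦ ?_
  by_cases hx : x ∈ A
  · exact hφ.continuousAt.smul (hu.continuousAt (hA.mem_nhds hx))
  · have hlim : Tendsto φ (𝓝 x) (𝓝 0) := hφ0 x hx ▸ hφ.tendsto x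
    simpa [ContinuousAt, hφ0 x hx] using
      hlim.zero_smul_isBoundedUnder_le (isBoundedUnder_of ⟨M, hM⟩)

variable {E Y ι : Type*} [NormedAddCommGroup E] [InnerProductSpace ℝ E] [FiniteDimensional ℝ E]
  [NormedAddCommGroup Y] [NormedSpace ℝ Y] [FiniteDimensional ℝ Y]

theorem exists_forall_smul_sum_ne [Fintype ι]
    (hdim : Module.finrank ℝ Y + 1 < Module.finrank ℝ E) {φ : ι → Y → ℝ}
    (hφ : ∀ i, ContDiff ℝ 1 (φ i)) {D : ι → Set E} (hD : ∀ i, (D i).Countable) :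
    ∃ v : E, ∀ (a : ℝ) (y : Y) (q : ι → E), (∀ i, q i ∈ D i) → a • ∑ i, φ i y • q i ≠ v := by
  have (i : ι) : Countable (D i) := (hD i).to_subtype
  let Q : (∀ i, D i) → ℝ × Y → E := fun q p ↦ p.1 • ∑ i, φ i p.2 • (q i : E)
  have hQ q : ContDiff ℝ 1 (Q q) :=
    contDiff_fst.smul (ContDiff.sum fun i _ ↦ ((hφ i).comp contDiff_snd).smul contDiff_const)
  have hdimH : dimH (⋃ q, range (Q q)) < Module.finrank ℝ E := by
    rw [dimH_iUnion]
    refine (iSup_le fun q ↦ (hQ q).dimH_range_le).trans_lt ?_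
    rw [Module.finrank_prod, Module.finrank_self, add_comm]
    exact_mod_cast hdim
  obtain ⟨v, hv⟩ := (dense_compl_of_dimH_lt_finrank hdimH).nonempty
  exact ⟨v, fun a y q hq h ↦ hv (mem_iUnion.2 ⟨fun i ↦ ⟨q i, hq i⟩, (a, y), h⟩)⟩

theorem exists_finset_sum_smul_inner_pos {f : sphere (0 : E) 1 → Y} (hf : Continuous f) {ε : ℝ}
    (hε : 0 < ε) (hne : ∀ x y, dist (f x) (f y) < ε → ⟪(x : E), (y : E)⟫ ≠ 0) :
    ∃ (T : Finset Y) (φ : T → Y → ℝ) (σ : T → sphere (0 : E) 1 → E),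
      (∀ c, ContDiff ℝ 1 (φ c)) ∧ (∀ c, (range (σ c)).Countable) ∧
      Continuous (fun x ↦ ∑ c, φ c (f x) • σ c x) ∧
      ∀ x : sphere (0 : E) 1, 0 < ⟪(x : E), ∑ c, φ c (f x) • σ c x⟫ := by
  obtain ⟨T, -, hT, hcover⟩ := (isCompact_range hf).finite_cover_balls (half_pos hε)
  lift T to Finset Y using hT
  let φ (c : Y) : ContDiffBump c := ⟨ε / 4, ε / 2, by positivity, by linarith⟩
  have hφ0 {c y : Y} (hy : y ∉ ball c (ε / 2)) : φ c y = 0 :=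
    (φ c).zero_of_le_dist (by simpa using hy)
  have hopen (c : Y) : IsOpen (f ⁻¹' ball c (ε / 2)) := isOpen_ball.preimage hf
  choose σ hcount hcont hpos using fun c ↦ exists_countable_range_inner_pos (hopen c)
    fun x hx y hy ↦ hne x y (by
      linarith [dist_triangle_right (f x) (f y) c, mem_ball.1 hx, mem_ball.1 hy])
  refine ⟨T, fun c ↦ φ c, fun c x ↦ σ c x, fun c ↦ (φ c).contDiff, fun c ↦ ?_,
    continuous_finsetSum _ fun c _ ↦ ?_, fun x ↦ ?_⟩
  · simpa only [← range_comp'] using (hcount c).image ((↑) : sphere (0 : E) 1 → E)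
  · exact continuous_smul_of_continuousOn_of_eq_zero (hopen c) ((φ c).continuous.comp hf)
      (fun x hx ↦ hφ0 hx) (continuous_subtype_val.comp_continuousOn (hcont c)) (M := 1) (by simp)
  · have hterm {c : Y} (hc : f x ∈ ball c (ε / 2)) : 0 < φ c (f x) * ⟪(x : E), (σ c x : E)⟫ :=
      mul_pos ((φ c).pos_of_mem_ball hc) (hpos c x hc)
    obtain ⟨c, hcT, hc⟩ := mem_iUnion₂.1 (hcover (mem_range_self x))
    simp only [inner_sum, real_inner_smul_right]
    refine Finset.sum_pos' (fun d _ ↦ ?_) ⟨⟨c, hcT⟩, Finset.mem_univ _, hterm hc⟩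
    by_cases hd : f x ∈ ball (d : Y) (ε / 2)
    · exact (hterm hd).le
    · rw [hφ0 hd, zero_mul]

theorem exists_inner_eq_zero_and_eq {f : sphere (0 : E) 1 → Y} (hf : Continuous f)
    (hdim : Module.finrank ℝ Y + 1 < Module.finrank ℝ E) :
    ∃ x y : sphere (0 : E) 1, ⟪(x : E), (y : E)⟫ = 0 ∧ f x = f y := by
  by_contra! hno
  have : Nontrivial E := Module.nontrivial_of_finrank_pos (R := ℝ) (by omega)
  have hcompact :
      IsCompact {p : sphere (0 : E) 1 × sphere (0 : E) 1 | ⟪(p.1 : E), (p.2 : E)⟫ = 0} :=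
    (isClosed_eq (by fun_prop) continuous_const).isCompact
  obtain ⟨ε, hε, hsep⟩ := hcompact.exists_forall_le' (f := fun p ↦ dist (f p.1) (f p.2)) (a := 0)
    (by fun_prop) fun p hp ↦ dist_pos.2 (hno p.1 p.2 hp)
  obtain ⟨T, φ, σ, hφ, hσ, hcont, hpos⟩ := exists_finset_sum_smul_inner_pos hf hε
    fun x y hxy hinner ↦ (hsep (x, y) hinner).not_gt hxy
  obtain ⟨v, hv⟩ := exists_forall_smul_sum_ne hdim hφ hσ
  obtain ⟨a, x, hax⟩ := exists_smul_eq_of_inner_pos hcont hpos v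
  exact hv a (f x) (σ · x) (fun c ↦ mem_range_self x) hax

theorem exists_mem_submodule_inner_eq_zero_and_eq {f : sphere (0 : E) 1 → Y} (hf : Continuous f)
    (V : Submodule ℝ E) (hdim : Module.finrank ℝ Y + 1 < Module.finrank ℝ V) :
    ∃ x y : sphere (0 : E) 1, (x : E) ∈ V ∧ (y : E) ∈ V ∧ ⟪(x : E), (y : E)⟫ = 0 ∧ f x = f y := by
  let incl : sphere (0 : V) 1 → sphere (0 : E) 1 := fun x ↦
    ⟨(x : V), mem_sphere_zero_iff_norm.2 (norm_eq_of_mem_sphere x)⟩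
  have hincl : Continuous incl := by fun_prop
  obtain ⟨x, y, hxy, hfxy⟩ := exists_inner_eq_zero_and_eq (hf.comp hincl) hdim
  exact ⟨incl x, incl y, x.1.2, y.1.2, hxy, hfxy⟩

end OrthogonalPair

section OrthonormalPairs

theorem orthonormal_finCons {𝕜 E ι : Type*} [RCLike 𝕜] [NormedAddCommGroup E]
    [InnerProductSpace 𝕜 E] {k : ℕ} {w : ι → E} {v : Fin k × ι → E} (hw : Orthonormal 𝕜 w)
    (hv : Orthonormal 𝕜 v) (hvw : ∀ p j, inner 𝕜 (v p) (w j) = 0) :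
    Orthonormal 𝕜 fun p : Fin (k + 1) × ι ↦
      Fin.cons (α := fun _ ↦ ι → E) w (fun i j ↦ v (i, j)) p.1 p.2 := by
  constructor
  · rintro ⟨i, a⟩
    cases i using Fin.cases
    · exact hw.norm_eq_one a
    · exact hv.norm_eq_one _
  · rintro ⟨i, a⟩ ⟨j, b⟩ hne
    cases i using Fin.cases <;> cases j using Fin.cases
    · exact hw.inner_eq_zero fun hab ↦ hne (Prod.ext rfl hab)
    · exact inner_eq_zero_symm.1 (hvw _ a)
    · exact hvw _ b
    · exact hv.inner_eq_zero fun h ↦ hne (by simp_all)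

theorem flip_stiefel_sphere_three_pairs_general {E Y : Type*} [NormedAddCommGroup E]
    [InnerProductSpace ℝ E] [FiniteDimensional ℝ E] [NormedAddCommGroup Y] [NormedSpace ℝ Y]
    [FiniteDimensional ℝ Y] {k : ℕ}
    (hdim : Module.finrank ℝ Y + 2 * k ≤ Module.finrank ℝ E) {f : sphere (0 : E) 1 → Y}
    (hf : Continuous f) :
    ∃ v : Fin k × Fin 2 → sphere (0 : E) 1,
      Orthonormal ℝ (fun p ↦ (v p : E)) ∧ ∀ i, f (v (i, 0)) = f (v (i, 1)) := by
  induction k with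
  | zero => exact ⟨isEmptyElim, .of_isEmpty _, isEmptyElim⟩
  | succ k ih =>
    obtain ⟨v, hv, hfv⟩ := ih (by omega)
    let W := Submodule.span ℝ (range fun p ↦ (v p : E))
    have hW : Module.finrank ℝ W = 2 * k := by
      simp [W, finrank_span_eq_card hv.linearIndependent, mul_comm]
    have hsum := W.finrank_add_finrank_orthogonal
    obtain ⟨x, y, hx, hy, hxy, hfxy⟩ := exists_mem_submodule_inner_eq_zero_and_eq hf Wᗮ (by omega)
    have hvW p : (v p : E) ∈ W := Submodule.subset_span ⟨p, rfl⟩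
    have hpair : Orthonormal ℝ fun j ↦ (![x, y] j : E) := by
      simpa [orthonormal_iff_ite, Fin.forall_fin_two, hxy] using (real_inner_comm _ _).trans hxy
    have hcross p : ∀ j, ⟪(v p : E), (![x, y] j : E)⟫ = 0 :=
      Fin.forall_fin_two.2 ⟨hx _ (hvW p), hy _ (hvW p)⟩
    refine ⟨fun p ↦ Fin.cons (α := fun _ ↦ Fin 2 → _) ![x, y] (fun i j ↦ v (i, j)) p.1 p.2,
      ?_, Fin.cases hfxy hfv⟩
    convert orthonormal_finCons hpair hv hcross using 2 with p
    rcases p with ⟨i, j⟩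
    cases i using Fin.cases <;> rfl

end OrthonormalPairs

theorem sub_flipStiefelR_sub_one_div_three_add_six_le {n : ℕ} (hn : 6 ≤ n) :
    (n - flipStiefelR n - 1) / 3 + 6 ≤ n := by
  unfold flipStiefelR
  split_ifs <;> omega

/-- For every integer `n ≥ 6` and every continuous map
`f : S^{n-1} → ℝ^{⌊(n - r_n - 1)/3⌋}`, there exist pairwise orthogonal
`v₁, …, v₆` in the sphere with `f v₁ = f v₂`, `f v₃ = f v₄`, `f v₅ = f v₆`. -/
theorem flip_stiefel_sphere_three_pairs (n : ℕ) (hn : 6 ≤ n)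
    (f : Metric.sphere (0 : EuclideanSpace ℝ (Fin n)) 1 →
         EuclideanSpace ℝ (Fin ((n - flipStiefelR n - 1) / 3)))
    (hf : Continuous f) :
    ∃ v : Fin 6 → Metric.sphere (0 : EuclideanSpace ℝ (Fin n)) 1,
      (∀ i j : Fin 6, i ≠ j →
        ⟪(v i : EuclideanSpace ℝ (Fin n)), (v j : EuclideanSpace ℝ (Fin n))⟫ = 0) ∧
      f (v 0) = f (v 1) ∧ f (v 2) = f (v 3) ∧ f (v 4) = f (v 5) := by
  obtain ⟨v, hv, hfv⟩ := flip_stiefel_sphere_three_pairs_general (k := 3)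
    (by simpa using sub_flipStiefelR_sub_one_div_three_add_six_le hn) hf
  let e : Fin 6 ≃ Fin 3 × Fin 2 := (finProdFinEquiv (m := 3) (n := 2)).symm
  exact ⟨v ∘ e, fun i j hij ↦ hv.2 (e.injective.ne hij), hfv 0, hfv 1, hfv 2⟩
end
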